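/- The kernel 𝓘₁ of the ℚ-algebra homomorphism ψ : ℚ[e_1,…,e_n] → H⁰(M_1(𝒜)) sending e_i to the Heaviside function x_i is already generated by the two families: (1) e_i² − e_i for all i; (2) ∏_{i∈S⁺} e_i · ∏_{j∈S⁻} (e_j − 1) for all pairs of disjoint subsets S⁺, S⁻ ⊆ {1,…,n} such that ⋂_{i∈S⁺} H_i⁺ ∩ ⋂_{j∈S⁻} H_j⁻ = ∅. -/

import Mathlib

/-!
Modulo the relations `e i ^ 2 = e i`, the polynomial ring becomes the ring of functions on the
cube `{0,1}ⁿ`: the polynomials `vertexPoly S` sum to `1` (`sum_vertexPoly`), and multiplying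
`vertexPoly S` by `p` has the same effect as multiplying it by the scalar `p(1_S)`
(`sub_eval_mul_vertexPoly_mem`). Hence `p` is congruent to `∑ S, p(1_S) • vertexPoly S`.

If `p` is in the kernel, each summand is in the span. Either the sign vector `S` is realised by a
point of the complement, and evaluating there gives `p(1_S) = 0`; or the corresponding intersection
of all half-spaces is empty, and `vertexPoly S` is up to sign in the second family
(`vertexPoly_mem_of_empty`). The other inclusion is checked pointwise.
-/

/-!
Varchenko–Gelfand presentation of the ring of locally constant functions on the
complement of a real affine hyperplane arrangement (Statement 1).
-/

open MvPolynomial Set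

variable {V : Type*} [NormedAddCommGroup V] [NormedSpace ℝ V] [FiniteDimensional ℝ V]
variable {n : ℕ}

/-- The complement `M₁(𝒜)` of the arrangement given by the affine forms `ω i`. -/
def M₁ (ω : Fin n → V →ᵃ[ℝ] ℝ) : Set V := {v | ∀ i, ω i v ≠ 0}

/-- The hyperplane `H i`. -/
def Hyp (ω : Fin n → V →ᵃ[ℝ] ℝ) (i : Fin n) : Set V := {v | ω i v = 0}

/-- The open positive half-space `H i⁺`. -/
def Hplus (ω : Fin n → V →ᵃ[ℝ] ℝ) (i : Fin n) : Set V := {v | 0 < ω i v}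

/-- The open negative half-space `H i⁻`. -/
def Hminus (ω : Fin n → V →ᵃ[ℝ] ℝ) (i : Fin n) : Set V := {v | ω i v < 0}

/-- The Heaviside function `x i`: the locally constant function on `M₁(𝒜)` which is
`1` on `H i⁺` and `0` on `H i⁻`. -/
noncomputable def heaviside (ω : Fin n → V →ᵃ[ℝ] ℝ) (i : Fin n) :
    LocallyConstant (M₁ ω) ℚ where
  toFun v := if 0 < ω i v.1 then 1 else 0
  isLocallyConstant := by
    rw [IsLocallyConstant.iff_exists_open]
    rintro ⟨v, hv⟩
    rcases lt_or_gt_of_ne (hv i) with h | h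
    · refine ⟨{w : M₁ ω | ω i w.1 < 0}, ?_, h, fun w hw => ?_⟩
      · exact (isOpen_lt ((ω i).continuous_of_finiteDimensional.comp
          continuous_subtype_val) continuous_const)
      · simp only [Set.mem_setOf_eq] at hw
        simp [not_lt.mpr hw.le, not_lt.mpr h.le]
    · refine ⟨{w : M₁ ω | 0 < ω i w.1}, ?_, h, fun w hw => ?_⟩
      · exact (isOpen_lt continuous_const ((ω i).continuous_of_finiteDimensional.comp
          continuous_subtype_val))
      · simp only [Set.mem_setOf_eq] at hw
        simp [hw, h]

/-- Family (1): `e i ^ 2 - e i`. -/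
def fam1 (n : ℕ) : Set (MvPolynomial (Fin n) ℚ) :=
  {p | ∃ i : Fin n, p = X i ^ 2 - X i}

/-- Family (2): `∏_{i ∈ S⁺} e i · ∏_{j ∈ S⁻} (e j - 1)` for disjoint `S⁺`, `S⁻` with
`⋂_{i∈S⁺} H i⁺ ∩ ⋂_{j∈S⁻} H j⁻ = ∅`. -/
def fam2 (ω : Fin n → V →ᵃ[ℝ] ℝ) : Set (MvPolynomial (Fin n) ℚ) :=
  {p | ∃ Sp Sm : Finset (Fin n), Disjoint Sp Sm ∧
    (⋂ i ∈ Sp, Hplus ω i) ∩ (⋂ j ∈ Sm, Hminus ω j) = ∅ ∧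
    p = (∏ i ∈ Sp, X i) * ∏ j ∈ Sm, (X j - 1)}

/-- The polynomial `∏_{i ∈ S} e i · ∏_{j ∉ S} (1 - e j)`, whose values on `{0,1}ⁿ` are those of
the indicator function of the vertex `1_S`. -/
noncomputable def vertexPoly (S : Finset (Fin n)) : MvPolynomial (Fin n) ℚ :=
  (∏ i ∈ S, X i) * ∏ j ∈ Finset.univ \ S, (1 - X j)

/-- The vertex `1_S` of the cube `{0,1}ⁿ`. -/
def vertex (S : Finset (Fin n)) (i : Fin n) : ℚ := if i ∈ S then 1 else 0

theorem sum_vertexPoly : ∑ S : Finset (Fin n), vertexPoly S = 1 := by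
  have h := Finset.prod_add (fun i : Fin n => (X i : MvPolynomial (Fin n) ℚ))
    (fun i => 1 - X i) Finset.univ
  simpa [vertexPoly] using h.symm

/-- Modulo the idempotent relations, `e i` acts on `vertexPoly S` as the scalar `vertex S i`. -/
theorem X_sub_mul_vertexPoly_mem (S : Finset (Fin n)) (i : Fin n) :
    (X i - C (vertex S i)) * vertexPoly S ∈ Ideal.span (fam1 n) := by
  have hi : (X i ^ 2 - X i : MvPolynomial (Fin n) ℚ) ∈ Ideal.span (fam1 n) :=
    Ideal.subset_span ⟨i, rfl⟩
  by_cases h : i ∈ S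
  · rw [vertexPoly, ← Finset.mul_prod_erase S _ h]
    convert Ideal.mul_mem_right ((∏ k ∈ S.erase i, X k) * ∏ j ∈ Finset.univ \ S, (1 - X j))
      _ hi using 1
    simp only [vertex, h, if_true, C_1]
    ring
  · have h' : i ∈ Finset.univ \ S := by simp [h]
    rw [vertexPoly, ← Finset.mul_prod_erase (Finset.univ \ S) _ h']
    convert Ideal.mul_mem_right
      (-((∏ k ∈ S, X k) * ∏ j ∈ (Finset.univ \ S).erase i, (1 - X j))) _ hi using 1
    simp only [vertex, h, if_false, C_0]
    ring

/-- Modulo the idempotent relations, `p * vertexPoly S` is the scalar multiple of `vertexPoly S`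
by the value of `p` at the vertex `1_S`. -/
theorem sub_eval_mul_vertexPoly_mem (S : Finset (Fin n)) (p : MvPolynomial (Fin n) ℚ) :
    (p - C (eval (vertex S) p)) * vertexPoly S ∈ Ideal.span (fam1 n) := by
  induction p using MvPolynomial.induction_on with
  | C a => simp
  | add p q hp hq =>
    convert Ideal.add_mem _ hp hq using 1
    simp only [map_add]
    ring
  | mul_X p i hp =>
    convert Ideal.add_mem _ (Ideal.mul_mem_left _ p (X_sub_mul_vertexPoly_mem S i))
      (Ideal.mul_mem_left _ (C (vertex S i)) hp) using 1
    simp only [map_mul, eval_X]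
    ring

/-- If the intersection of half-spaces with sign vector `S` is empty, then `vertexPoly S` is, up to sign, a member
of the second family. -/
theorem vertexPoly_mem_of_empty (ω : Fin n → V →ᵃ[ℝ] ℝ) (S : Finset (Fin n))
    (h : (⋂ i ∈ S, Hplus ω i) ∩ (⋂ j ∈ Finset.univ \ S, Hminus ω j) = ∅) :
    vertexPoly S ∈ Ideal.span (fam2 ω) := by
  have hm : (∏ i ∈ S, X i) * ∏ j ∈ Finset.univ \ S, (X j - 1) ∈ Ideal.span (fam2 ω) :=
    Ideal.subset_span ⟨S, Finset.univ \ S, Finset.disjoint_sdiff, h, rfl⟩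
  convert Ideal.mul_mem_left _ ((-1) ^ (Finset.univ \ S).card) hm using 1
  rw [vertexPoly, mul_left_comm, ← Finset.prod_const, ← Finset.prod_mul_distrib]
  congr 1
  exact Finset.prod_congr rfl fun j _ => by ring

theorem aeval_heaviside_apply (ω : Fin n → V →ᵃ[ℝ] ℝ) (p : MvPolynomial (Fin n) ℚ) (v : M₁ ω) :
    (aeval (R := ℚ) (heaviside ω) p) v = eval (fun i => heaviside ω i v) p := by
  induction p using MvPolynomial.induction_on with
  | C a => simp
  | add p q hp hq => simp [hp, hq]
  | mul_X p i hp => simp [hp]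

/-- The kernel of `ψ : ℚ[e₁,…,eₙ] → H⁰(M₁(𝒜))` is already generated by
families (1) and (2). -/
theorem vg_kernel_two_families (ω : Fin n → V →ᵃ[ℝ] ℝ) (hω : ∀ i, (ω i).linear ≠ 0) :
    RingHom.ker (MvPolynomial.aeval (R := ℚ) (heaviside ω)).toRingHom =
      Ideal.span (fam1 n ∪ fam2 ω) := by
  apply le_antisymm
  · intro p hp
    have hp0 : aeval (R := ℚ) (heaviside ω) p = 0 := hp
    rw [← mul_one p, ← sum_vertexPoly, Finset.mul_sum]
    refine Ideal.sum_mem _ fun S _ => ?_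
    have hsub := Ideal.span_mono (subset_union_left (t := fam2 ω))
      (sub_eval_mul_vertexPoly_mem S p)
    rcases Set.eq_empty_or_nonempty
      ((⋂ i ∈ S, Hplus ω i) ∩ (⋂ j ∈ Finset.univ \ S, Hminus ω j)) with h | ⟨v, hv⟩
    · exact Ideal.mul_mem_left _ p
        (Ideal.span_mono subset_union_right (vertexPoly_mem_of_empty ω S h))
    · -- A point of the intersection lies in `M₁` and its Heaviside values form the vertex `1_S`,
      -- so `p` vanishes there.
      simp only [Hplus, Hminus, mem_inter_iff, mem_iInter, mem_ofPred_eq, Finset.mem_sdiff,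
        Finset.mem_univ, true_and] at hv
      have hvM : v ∈ M₁ ω := fun i => by
        by_cases hi : i ∈ S
        · exact (hv.1 i hi).ne'
        · exact (hv.2 i hi).ne
      have hvert : (fun i => heaviside ω i ⟨v, hvM⟩) = vertex S := by
        funext i
        change (if 0 < ω i v then (1 : ℚ) else 0) = if i ∈ S then 1 else 0
        by_cases hi : i ∈ S
        · simp [hi, hv.1 i hi]
        · simp [hi, (hv.2 i hi).le]
      have h0 : eval (vertex S) p = 0 := by
        rw [← hvert, ← aeval_heaviside_apply, hp0]
        rfl
      simpa [h0] using hsub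
  · rw [Ideal.span_le]
    rintro p (⟨i, rfl⟩ | ⟨Sp, Sm, -, hempty, rfl⟩)
    · change aeval (R := ℚ) (heaviside ω) _ = 0
      ext v
      rw [aeval_heaviside_apply]
      simp only [map_sub, map_pow, eval_X]
      change (if 0 < ω i v then (1 : ℚ) else 0) ^ 2 - (if 0 < ω i v then (1 : ℚ) else 0) = 0
      split_ifs <;> norm_num
    · change aeval (R := ℚ) (heaviside ω) _ = 0
      ext v
      rw [aeval_heaviside_apply]
      simp only [map_mul, map_prod, map_sub, map_one, eval_X]
      change _ = (0 : ℚ)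
      by_contra hne
      obtain ⟨h1, h2⟩ := mul_ne_zero_iff.mp hne
      rw [Finset.prod_ne_zero_iff] at h1 h2
      have hv : (v : V) ∈ (⋂ i ∈ Sp, Hplus ω i) ∩ (⋂ j ∈ Sm, Hminus ω j) := by
        simp only [Hplus, Hminus, mem_inter_iff, mem_iInter, mem_ofPred_eq]
        refine ⟨fun i hi => ?_, fun j hj => ?_⟩
        · by_contra hc
          exact h1 i hi (if_neg hc)
        · by_contra hc
          have hpos : 0 < ω j v := lt_of_le_of_ne (not_lt.mp hc) (v.2 j).symm
          exact h2 j hj (sub_eq_zero.mpr (if_pos hpos))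
      rw [hempty] at hv
      exact hv
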